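/- Let K be a number field and let R be a sieve in residue form for K. Assume there is a finite subset T ⊆ 𝓞_K such that for every nonzero prime ideal 𝔭 and every x ∈ 𝓞_K with x ∈ R_𝔭 there exists t ∈ T with x − t ∈ 𝔭², and assume that for every 𝔭 the set R_𝔭 does not contain all residue classes of 𝓞_K/𝔭^{k(𝔭)}. Then the density of V(K,R) in 𝓞_K exists and is positive: as X → ∞, the ratio #{x ∈ V(K,R) : ‖x‖ ≤ X} / #{x ∈ 𝓞_K : ‖x‖ ≤ X} converges to the value of the convergent infinite product ∏_𝔭 (1 − meas(R_𝔭)) taken over all nonzero prime ideals 𝔭 of 𝓞_K, and this product is strictly positive. -/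

import Mathlib

open NumberField

/-- A sieve in residue form for a number field `K`: for every (prime) ideal `P` of
`𝓞 K`, an exponent `k P ≥ 1` and a set `R P` of residue classes in `𝓞 K ⧸ P ^ k P`. -/
structure ResidueSieve (K : Type*) [Field K] [NumberField K] where
  k : Ideal (𝓞 K) → ℕ
  k_pos : ∀ P : Ideal (𝓞 K), 1 ≤ k P
  R : (P : Ideal (𝓞 K)) → Set (𝓞 K ⧸ P ^ k P)

/-- `x ∈ R_𝔭`: the residue class of `x` modulo `𝔭^{k(𝔭)}` belongs to `R 𝔭`. -/
def ResidueSieve.Mem {K : Type*} [Field K] [NumberField K] (S : ResidueSieve K)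
    (P : Ideal (𝓞 K)) (x : 𝓞 K) : Prop :=
  Ideal.Quotient.mk (P ^ S.k P) x ∈ S.R P

/-- `V(K,R)`: the set of integers of `K` avoiding the sieve at every nonzero prime. -/
def ResidueSieve.V {K : Type*} [Field K] [NumberField K] (S : ResidueSieve K) :
    Set (𝓞 K) :=
  {x | ∀ P : Ideal (𝓞 K), P.IsPrime → P ≠ ⊥ → ¬ S.Mem P x}

/-- The Haar measure of the sieve set at `P`: the number of excluded residue classes
divided by the total number `N(P)^{k(P)}` of residue classes modulo `P^{k(P)}`. -/
noncomputable def ResidueSieve.meas {K : Type*} [Field K] [NumberField K]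
    (S : ResidueSieve K) (P : Ideal (𝓞 K)) : ℝ :=
  (Nat.card ↥(S.R P) : ℝ) / (Ideal.absNorm P : ℝ) ^ (S.k P)

/-!
By the Chinese remainder theorem and the asymptotic translation invariance of the house balls, the
integers avoiding the sieve at the primes of a finite set `Q` have density
`∏_{P∈Q} (1 - meas R_P)`. The integers removed at the other primes lie in finitely many translates
of `⋃_{P∉Q} P^2`. The nonzero elements of an ideal `I` have house at least `N(I) ^ (1 / [K : ℚ])`,
so a packing argument shows that they make up a proportion at most `C / N(I)` of every house ball,
with `C` depending only on `K`. As `∑ N(P) ^ (-2)` converges, the error committed by looking only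
at the primes in `Q` tends to `0` uniformly in the radius, and the limits over `Q` and over the
radius may be interchanged.
-/

open Filter Topology Pointwise

section LatticePoints

theorem exists_tendsto_card_closedBall_inter_div_pow {E : Type*} [NormedAddCommGroup E]
    [NormedSpace ℝ E] [FiniteDimensional ℝ E] [Nontrivial E] (L : Submodule ℤ E)
    [DiscreteTopology L] [IsZLattice ℝ L] :
    ∃ c : ℝ, 0 < c ∧
      Tendsto (fun r : ℝ ↦ (Nat.card (Metric.closedBall (0 : E) r ∩ L : Set E) : ℝ) /
        r ^ Module.finrank ℝ E) atTop (𝓝 c) := by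
  borelize E
  let b := Module.Free.chooseBasis ℤ L
  let e := (b.ofZLatticeBasis ℝ L).equivFunL
  set n := Module.finrank ℝ E
  have hn : n ≠ 0 := Module.finrank_pos.ne'
  have card_index : Fintype.card (Module.Free.ChooseBasisIndex ℤ L) = n := by
    rw [← Module.finrank_eq_card_chooseBasisIndex, ZLattice.rank ℝ L]
  have : Nonempty (Module.Free.ChooseBasisIndex ℤ L) := by
    rw [← Fintype.card_pos_iff, card_index]
    exact Module.finrank_pos
  have ball_eq {r : ℝ} (hr : 0 ≤ r) :
      {x ∈ (Set.univ : Set E) | ‖x‖ ^ n ≤ r ^ n} = Metric.closedBall 0 r := by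
    ext x
    simp [pow_le_pow_iff_left₀ (norm_nonneg x) hr hn]
  have unit_ball_eq : {x ∈ (Set.univ : Set E) | ‖x‖ ^ n ≤ 1} = Metric.closedBall 0 1 := by
    simpa only [one_pow] using ball_eq zero_le_one
  have convex_image : Convex ℝ (e '' Metric.closedBall 0 1) :=
    (convex_closedBall 0 1).linear_image e.toLinearMap
  have interior_image : (interior (e '' Metric.closedBall 0 1)).Nonempty :=
    ⟨e 0, interior_mono (Set.image_mono Metric.ball_subset_closedBall)
      ((e.toHomeomorph.isOpenMap _ Metric.isOpen_ball).interior_eq.symm ▸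
        Set.mem_image_of_mem e (Metric.mem_ball_self one_pos))⟩
  have key := ZLattice.covolume.tendsto_card_le_div'' b (X := Set.univ) (F := fun x ↦ ‖x‖ ^ n)
    (fun _ _ _ _ ↦ trivial)
    (fun x r hr ↦ by rw [norm_smul, mul_pow, Real.norm_of_nonneg hr, card_index])
    (unit_ball_eq ▸ Metric.isBounded_closedBall)
    (unit_ball_eq ▸ Metric.isClosed_closedBall.measurableSet)
    (unit_ball_eq ▸ convex_image.addHaar_frontier _)
  rw [unit_ball_eq] at key
  refine ⟨_, ENNReal.toReal_pos (MeasureTheory.Measure.measure_pos_of_nonempty_interior _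
    interior_image).ne' ((isCompact_closedBall 0 1).image e.continuous).measure_lt_top.ne,
    (key.comp (tendsto_pow_atTop hn)).congr' ?_⟩
  filter_upwards [eventually_ge_atTop 0] with r hr
  rw [Function.comp_apply, ball_eq hr]

theorem tendsto_add_pow_div_pow (a : ℝ) (n : ℕ) :
    Tendsto (fun x : ℝ ↦ (x + a) ^ n / x ^ n) atTop (𝓝 1) := by
  have h : Tendsto (fun x : ℝ ↦ (1 + a / x) ^ n) atTop (𝓝 ((1 + 0) ^ n)) :=
    ((tendsto_const_nhds.div_atTop tendsto_id).const_add 1).pow n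
  rw [add_zero, one_pow] at h
  refine h.congr' ?_
  filter_upwards [eventually_gt_atTop 0] with x hx
  rw [← div_pow, add_div, div_self hx.ne']

end LatticePoints

section HouseBall

variable {K : Type*} [Field K] [NumberField K]

theorem house_neg (a : K) : house (-a) = house a := by
  simp only [house, map_neg, norm_neg]

theorem house_sub_le (a b : K) : house (a - b) ≤ house a + house b := by
  simpa only [sub_eq_add_neg, house_neg] using house_add_le a (-b)

open scoped Classical in
theorem house_eq_norm_mixedEmbedding (x : K) : house x = ‖mixedEmbedding K x‖ := by
  rw [mixedEmbedding.norm_eq_sup'_normAtPlace]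
  simp only [mixedEmbedding.normAtPlace_apply]
  apply le_antisymm
  · rw [house, canonicalEmbedding.norm_le_iff]
    intro φ
    rw [← InfinitePlace.apply φ x]
    exact Finset.le_sup' (fun w : InfinitePlace K ↦ w x) (Finset.mem_univ _)
  · refine Finset.sup'_le _ _ fun w _ ↦ ?_
    rw [← InfinitePlace.norm_embedding_eq]
    exact norm_embedding_le_house x _

theorem absNorm_le_house_pow {I : Ideal (𝓞 K)} {y : 𝓞 K} (hy : y ∈ I) (hy0 : y ≠ 0) :
    (Ideal.absNorm I : ℝ) ≤ house (y : K) ^ Module.finrank ℚ K := by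
  obtain ⟨σ⟩ : Nonempty (K →+* ℂ) := inferInstance
  have norm_ne_zero : Algebra.norm ℤ y ≠ 0 := Algebra.norm_ne_zero_iff.mpr hy0
  have absNorm_le : (Ideal.absNorm I : ℤ) ≤ |Algebra.norm ℤ y| :=
    Int.le_of_dvd (abs_pos.mpr norm_ne_zero) ((dvd_abs _ _).mpr (Ideal.absNorm_dvd_norm_of_mem hy))
  calc (Ideal.absNorm I : ℝ) ≤ |(Algebra.norm ℤ y : ℝ)| := by exact_mod_cast absNorm_le
    _ = ‖Algebra.norm ℚ (y : K)‖ := by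
      rw [← Algebra.coe_norm_int, ← Rat.norm_cast_real, Real.norm_eq_abs, Rat.cast_intCast]
    _ ≤ ‖σ y‖ * house (y : K) ^ (Module.finrank ℚ K - 1) := norm_norm_le_norm_mul_house_pow _ σ
    _ ≤ house (y : K) * house (y : K) ^ (Module.finrank ℚ K - 1) := by
      gcongr
      · exact pow_nonneg (house_nonneg _) _
      · exact norm_embedding_le_house _ σ
    _ = house (y : K) ^ Module.finrank ℚ K := mul_pow_sub_one Module.finrank_pos.ne' _

variable (K) in
/-- The algebraic integers all of whose conjugates have absolute value at most `X`. They play the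
role of the balls of radius `X` in the definition of density. -/
def houseBall (X : ℝ) : Set (𝓞 K) :=
  {x | house (x : K) ≤ X}

theorem mem_houseBall {x : 𝓞 K} {X : ℝ} : x ∈ houseBall K X ↔ house (x : K) ≤ X :=
  Iff.rfl

theorem houseBall_mono : Monotone (houseBall K) :=
  fun _ _ hXY _ hx ↦ hx.trans hXY

theorem add_mem_houseBall {x y : 𝓞 K} {X Y : ℝ} (hx : x ∈ houseBall K X) (hy : y ∈ houseBall K Y) :
    x + y ∈ houseBall K (X + Y) :=
  (house_add_le (x : K) y).trans (add_le_add hx hy)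

theorem sub_mem_houseBall {x y : 𝓞 K} {X Y : ℝ} (hx : x ∈ houseBall K X) (hy : y ∈ houseBall K Y) :
    x - y ∈ houseBall K (X + Y) :=
  (house_sub_le (x : K) y).trans (add_le_add hx hy)

theorem finite_houseBall (X : ℝ) : (houseBall K X).Finite := by
  refine ((Embeddings.finite_of_norm_le K ℂ X).preimage
    RingOfIntegers.coe_injective.injOn).subset fun x hx ↦ ⟨x.2, fun φ ↦ ?_⟩
  exact (norm_embedding_le_house _ φ).trans hx

theorem ncard_houseBall_mono : Monotone fun X ↦ (houseBall K X).ncard :=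
  fun _ Y hXY ↦ Set.ncard_le_ncard (houseBall_mono hXY) (finite_houseBall Y)

theorem ncard_houseBall_pos {X : ℝ} (hX : 0 ≤ X) : 0 < (houseBall K X).ncard :=
  (Set.ncard_pos (finite_houseBall X)).mpr ⟨0, by simpa [mem_houseBall, house] using hX⟩

open scoped Classical in
theorem image_mixedEmbedding_houseBall (X : ℝ) :
    (fun x : 𝓞 K ↦ mixedEmbedding K x) '' houseBall K X =
      Metric.closedBall 0 X ∩ (mixedEmbedding.integerLattice K : Set _) := by
  ext y
  constructor
  · rintro ⟨x, hx, rfl⟩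
    exact ⟨by rwa [mem_closedBall_zero_iff, ← house_eq_norm_mixedEmbedding], x, rfl⟩
  · rintro ⟨hy, x, rfl⟩
    exact ⟨x, (house_eq_norm_mixedEmbedding _).trans_le (mem_closedBall_zero_iff.mp hy), rfl⟩

variable (K) in
theorem exists_tendsto_ncard_houseBall_div_pow :
    ∃ c : ℝ, 0 < c ∧ Tendsto (fun X : ℝ ↦ ((houseBall K X).ncard : ℝ) /
      X ^ Module.finrank ℚ K) atTop (𝓝 c) := by
  classical
  obtain ⟨c, hc, h⟩ :=
    exists_tendsto_card_closedBall_inter_div_pow (mixedEmbedding.integerLattice K)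
  refine ⟨c, hc, h.congr fun X ↦ ?_⟩
  have embedding_injective : Function.Injective fun x : 𝓞 K ↦ mixedEmbedding K x :=
    (mixedEmbedding_injective K).comp RingOfIntegers.coe_injective
  rw [mixedEmbedding.finrank, ← image_mixedEmbedding_houseBall, Nat.card_coe_set_eq,
    Set.ncard_image_of_injective _ embedding_injective]

theorem tendsto_ncard_houseBall_add_div (a : ℝ) :
    Tendsto (fun X ↦ ((houseBall K (X + a)).ncard : ℝ) / (houseBall K X).ncard) atTop (𝓝 1) := by
  obtain ⟨c, hc, h⟩ := exists_tendsto_ncard_houseBall_div_pow K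
  have h_shift := h.comp (tendsto_atTop_add_const_right atTop a tendsto_id)
  have h_ratio := (h_shift.mul (tendsto_add_pow_div_pow a (Module.finrank ℚ K))).div h hc.ne'
  rw [mul_one, div_self hc.ne'] at h_ratio
  refine h_ratio.congr' ?_
  filter_upwards [eventually_gt_atTop 0, eventually_gt_atTop (-a)] with X hX hXa
  have : X + a ≠ 0 := by linarith
  simp only [Pi.div_apply, Function.comp_apply, id]
  field_simp

variable (K) in
theorem tendsto_ncard_houseBall_atTop :
    Tendsto (fun X ↦ ((houseBall K X).ncard : ℝ)) atTop atTop := by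
  obtain ⟨c, hc, h⟩ := exists_tendsto_ncard_houseBall_div_pow K
  refine (h.pos_mul_atTop hc
    (tendsto_pow_atTop (Module.finrank_pos (R := ℚ) (M := K)).ne')).congr' ?_
  filter_upwards [eventually_gt_atTop 0] with X hX
  exact div_mul_cancel₀ _ (pow_pos hX _).ne'

variable (K) in
theorem exists_mul_pow_le_ncard_houseBall :
    ∃ c : ℝ, 0 < c ∧ ∀ X, 0 ≤ X → c * X ^ Module.finrank ℚ K ≤ (houseBall K X).ncard := by
  obtain ⟨c, hc, h⟩ := exists_tendsto_ncard_houseBall_div_pow K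
  obtain ⟨X₀, hX₀⟩ := eventually_atTop.mp (h.eventually_const_le (half_lt_self hc))
  set X₁ := max X₀ 1
  have hX₁ : 0 < X₁ := lt_max_of_lt_right one_pos
  refine ⟨min (c / 2) (X₁ ^ Module.finrank ℚ K)⁻¹, by positivity, fun X hX ↦ ?_⟩
  rcases le_total X₁ X with hle | hle
  · have hX_pos : 0 < X := hX₁.trans_le hle
    calc _ ≤ c / 2 * X ^ Module.finrank ℚ K := by gcongr; exact min_le_left _ _
      _ ≤ _ := (le_div_iff₀ (by positivity)).mp (hX₀ X ((le_max_left _ _).trans hle))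
  · calc _ ≤ (X₁ ^ Module.finrank ℚ K)⁻¹ * X₁ ^ Module.finrank ℚ K := by
          gcongr
          exact min_le_right _ _
      _ = 1 := inv_mul_cancel₀ (by positivity)
      _ ≤ _ := by exact_mod_cast ncard_houseBall_pos hX

variable (K) in
theorem exists_ncard_houseBall_le_mul_pow :
    ∃ C : ℝ, 0 < C ∧ ∀ X, 1 ≤ X → (houseBall K X).ncard ≤ C * X ^ Module.finrank ℚ K := by
  obtain ⟨c, hc, h⟩ := exists_tendsto_ncard_houseBall_div_pow K
  obtain ⟨X₀, hX₀⟩ := eventually_atTop.mp (h.eventually_le_const (lt_add_one c))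
  refine ⟨max (c + 1) (houseBall K X₀).ncard, by positivity, fun X hX ↦ ?_⟩
  rcases le_total X₀ X with hle | hle
  · calc _ ≤ (c + 1) * X ^ Module.finrank ℚ K := (div_le_iff₀ (by positivity)).mp (hX₀ X hle)
      _ ≤ _ := by gcongr; exact le_max_left _ _
  · calc _ ≤ ((houseBall K X₀).ncard : ℝ) := by exact_mod_cast ncard_houseBall_mono hle
      _ ≤ max (c + 1) (houseBall K X₀).ncard := le_max_right _ _
      _ ≤ _ := le_mul_of_one_le_right (by positivity) (one_le_pow₀ hX)

/-- Packing: translates of a small ball by the points of a separated set are disjoint. -/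
theorem ncard_inter_houseBall_mul_ncard_houseBall_le {A : Set (𝓞 K)} {δ : ℝ}
    (hA : A.Pairwise fun x y ↦ δ + δ < house ((x - y : 𝓞 K) : K)) (X : ℝ) :
    (A ∩ houseBall K X).ncard * (houseBall K δ).ncard ≤ (houseBall K (X + δ)).ncard := by
  rw [← Set.ncard_prod]
  refine Set.ncard_le_ncard_of_injOn (fun p ↦ p.1 + p.2)
    (fun p hp ↦ add_mem_houseBall hp.1.2 hp.2) ?_ (finite_houseBall _)
  rintro ⟨x, z⟩ ⟨hx, hz⟩ ⟨y, w⟩ ⟨hy, hw⟩ (hxy : x + z = y + w)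
  have x_sub_y : x - y = w - z := by linear_combination hxy
  obtain rfl : x = y := by
    by_contra hne
    exact (hA hx.1 hy.1 hne).not_ge (x_sub_y ▸ sub_mem_houseBall hw hz)
  rw [add_left_cancel hxy]

end HouseBall

section Density

variable {K : Type*} [Field K] [NumberField K] {A B : Set (𝓞 K)} {a b : ℝ}

/-- The proportion of the algebraic integers of house at most `X` that belong to `A`. -/
noncomputable def houseProportion (A : Set (𝓞 K)) (X : ℝ) : ℝ :=
  ((A ∩ houseBall K X).ncard : ℝ) / (houseBall K X).ncard

/-- The set `A` of algebraic integers has density `d`, where the integers are ordered by their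
house. -/
def HasHouseDensity (A : Set (𝓞 K)) (d : ℝ) : Prop :=
  Tendsto (houseProportion A) atTop (𝓝 d)

theorem houseProportion_mono (h : A ⊆ B) (X : ℝ) : houseProportion A X ≤ houseProportion B X := by
  unfold houseProportion
  gcongr
  exact (finite_houseBall X).inter_of_right B

theorem houseProportion_univ {X : ℝ} (hX : 0 ≤ X) :
    houseProportion (Set.univ : Set (𝓞 K)) X = 1 := by
  rw [houseProportion, Set.univ_inter, div_self]
  exact_mod_cast (ncard_houseBall_pos hX).ne'

theorem houseProportion_union_le (A B : Set (𝓞 K)) (X : ℝ) :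
    houseProportion (A ∪ B) X ≤ houseProportion A X + houseProportion B X := by
  simp only [houseProportion, ← add_div, Set.union_inter_distrib_right]
  gcongr
  exact_mod_cast Set.ncard_union_le _ _

theorem houseProportion_union (h : Disjoint A B) (X : ℝ) :
    houseProportion (A ∪ B) X = houseProportion A X + houseProportion B X := by
  simp only [houseProportion, ← add_div, Set.union_inter_distrib_right]
  rw [Set.ncard_union_eq (h.mono Set.inter_subset_left Set.inter_subset_left)
    ((finite_houseBall X).inter_of_right A) ((finite_houseBall X).inter_of_right B), Nat.cast_add]

theorem houseProportion_biUnion_le {ι : Type*} (s : Finset ι) (A : ι → Set (𝓞 K)) (X : ℝ) :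
    houseProportion (⋃ i ∈ s, A i) X ≤ ∑ i ∈ s, houseProportion (A i) X := by
  simp only [houseProportion, ← Finset.sum_div, Set.iUnion₂_inter]
  gcongr
  exact_mod_cast Finset.set_ncard_biUnion_le s fun i ↦ A i ∩ houseBall K X

theorem houseProportion_biUnion {ι : Type*} {s : Finset ι} {A : ι → Set (𝓞 K)}
    (hA : (s : Set ι).PairwiseDisjoint A) (X : ℝ) :
    houseProportion (⋃ i ∈ s, A i) X = ∑ i ∈ s, houseProportion (A i) X := by
  classical
  induction s using Finset.induction_on with
  | empty => simp [houseProportion]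
  | insert i s hi ih =>
    rw [Finset.coe_insert, Set.pairwiseDisjoint_insert_of_notMem (Finset.mem_coe.not.mpr hi)] at hA
    rw [Finset.set_biUnion_insert, Finset.sum_insert hi, ← ih hA.1]
    exact houseProportion_union (Set.disjoint_iUnion₂_right.mpr hA.2) X

theorem houseProportion_iUnion_le_tsum {ι : Type*} {A : ι → Set (𝓞 K)} {g : ι → ℝ} {X : ℝ}
    (hg : Summable g) (h : ∀ i, houseProportion (A i) X ≤ g i) :
    houseProportion (⋃ i, A i) X ≤ ∑' i, g i := by
  have g_nonneg (i : ι) : 0 ≤ g i := le_trans (by unfold houseProportion; positivity) (h i)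
  obtain ⟨s, hs, hsub⟩ := Set.finite_subset_iUnion
    ((finite_houseBall X).inter_of_right (⋃ i, A i)) Set.inter_subset_left
  lift s to Finset ι using hs
  calc houseProportion (⋃ i, A i) X
      = houseProportion ((⋃ i, A i) ∩ houseBall K X) X := by
        rw [houseProportion, houseProportion, Set.inter_assoc, Set.inter_self]
    _ ≤ houseProportion (⋃ i ∈ s, A i) X := houseProportion_mono hsub X
    _ ≤ ∑ i ∈ s, houseProportion (A i) X := houseProportion_biUnion_le s A X
    _ ≤ ∑ i ∈ s, g i := Finset.sum_le_sum fun i _ ↦ h i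
    _ ≤ ∑' i, g i := hg.sum_le_tsum s fun i _ ↦ g_nonneg i

theorem houseProportion_vadd_le (t : 𝓞 K) (A : Set (𝓞 K)) {X : ℝ} (hX : 0 ≤ X) :
    houseProportion (t +ᵥ A) X ≤ houseProportion A X +
      (((houseBall K (X + house (t : K))).ncard : ℝ) / (houseBall K X).ncard - 1) := by
  set Y := X + house (t : K)
  have hXY : houseBall K X ⊆ houseBall K Y :=
    houseBall_mono (le_add_of_nonneg_right (house_nonneg _))
  have shift : ((t +ᵥ A) ∩ houseBall K X).ncard ≤ (A ∩ houseBall K Y).ncard := by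
    refine Set.ncard_le_ncard_of_injOn (fun x ↦ x - t) ?_ sub_left_injective.injOn
      ((finite_houseBall Y).inter_of_right A)
    rintro x ⟨hx, hxX⟩
    rw [Set.mem_vadd_set_iff_neg_vadd_mem, vadd_eq_add, neg_add_eq_sub] at hx
    exact ⟨hx, sub_mem_houseBall hxX (mem_houseBall.mpr le_rfl)⟩
  have shell : (A ∩ houseBall K Y).ncard + (houseBall K X).ncard ≤
      (A ∩ houseBall K X).ncard + (houseBall K Y).ncard := by
    have hsub : A ∩ houseBall K Y ⊆ A ∩ houseBall K X ∪ houseBall K Y \ houseBall K X :=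
      fun x hx ↦ (em (x ∈ houseBall K X)).imp (⟨hx.1, ·⟩) (⟨hx.2, ·⟩)
    have := (Set.ncard_le_ncard hsub (((finite_houseBall X).inter_of_right A).union
      (finite_houseBall Y).sdiff)).trans (Set.ncard_union_le _ _)
    have := Set.ncard_sdiff_add_ncard_of_subset hXY (finite_houseBall Y)
    omega
  have ball_pos : (0 : ℝ) < (houseBall K X).ncard := by exact_mod_cast ncard_houseBall_pos hX
  calc houseProportion (t +ᵥ A) X
      ≤ ((A ∩ houseBall K X).ncard + ((houseBall K Y).ncard - (houseBall K X).ncard)) /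
          (houseBall K X).ncard := by
        unfold houseProportion
        gcongr
        rw [← add_sub_assoc, le_sub_iff_add_le]
        exact_mod_cast (Nat.add_le_add_right shift _).trans shell
    _ = _ := by rw [add_div, sub_div, div_self ball_pos.ne', houseProportion]

theorem tendsto_houseProportion_vadd_sub (t : 𝓞 K) (A : Set (𝓞 K)) :
    Tendsto (fun X ↦ houseProportion (t +ᵥ A) X - houseProportion A X) atTop (𝓝 0) := by
  have ratio_sub_one (s : 𝓞 K) := sub_self (1 : ℝ) ▸
    (tendsto_ncard_houseBall_add_div (K := K) (house (s : K))).sub_const 1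
  refine tendsto_of_tendsto_of_tendsto_of_le_of_le' (neg_zero (G := ℝ) ▸ (ratio_sub_one (-t)).neg)
    (ratio_sub_one t) ?_ ?_
  · filter_upwards [eventually_ge_atTop 0] with X hX
    have := houseProportion_vadd_le (-t) (t +ᵥ A) hX
    rw [neg_vadd_vadd] at this
    linarith
  · filter_upwards [eventually_ge_atTop 0] with X hX
    linarith [houseProportion_vadd_le t A hX]

theorem HasHouseDensity.le_of_subset (hA : HasHouseDensity A a) (hB : HasHouseDensity B b)
    (h : A ⊆ B) : a ≤ b :=
  le_of_tendsto_of_tendsto' hA hB (houseProportion_mono h)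

theorem HasHouseDensity.biUnion {ι : Type*} {s : Finset ι} {A : ι → Set (𝓞 K)} {d : ι → ℝ}
    (h : ∀ i ∈ s, HasHouseDensity (A i) (d i)) (hA : (s : Set ι).PairwiseDisjoint A) :
    HasHouseDensity (⋃ i ∈ s, A i) (∑ i ∈ s, d i) :=
  (tendsto_finsetSum s h).congr fun X ↦ (houseProportion_biUnion hA X).symm

theorem hasHouseDensity_singleton_zero : HasHouseDensity ({0} : Set (𝓞 K)) 0 := by
  refine (tendsto_ncard_houseBall_atTop K).inv_tendsto_atTop.congr' ?_
  filter_upwards [eventually_ge_atTop 0] with X hX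
  have zero_mem : (0 : 𝓞 K) ∈ houseBall K X := by simpa [mem_houseBall, house] using hX
  rw [houseProportion, Set.singleton_inter_of_mem zero_mem, Set.ncard_singleton, Nat.cast_one,
    one_div, Pi.inv_apply]

end Density

section ResidueClasses

variable {K : Type*} [Field K] [NumberField K]

theorem tendsto_houseProportion_preimage_mk_sub {I : Ideal (𝓞 K)} (p q : 𝓞 K ⧸ I) :
    Tendsto (fun X ↦ houseProportion (Ideal.Quotient.mk I ⁻¹' {p}) X -
      houseProportion (Ideal.Quotient.mk I ⁻¹' {q}) X) atTop (𝓝 0) := by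
  obtain ⟨t, ht⟩ := Ideal.Quotient.mk_surjective (p - q)
  have translate : Ideal.Quotient.mk I ⁻¹' {p} = t +ᵥ Ideal.Quotient.mk I ⁻¹' {q} := by
    ext x
    rw [Set.mem_vadd_set_iff_neg_vadd_mem, vadd_eq_add]
    simp only [Set.mem_preimage, Set.mem_singleton_iff, map_add, map_neg, ht,
      neg_add_eq_iff_eq_add, sub_add_cancel]
  rw [translate]
  exact tendsto_houseProportion_vadd_sub t _

/-- The residue classes are translates of each other, so their proportions are asymptotically equal;
there are `N(I)` of them and their proportions add up to `1`. -/
theorem hasHouseDensity_preimage_mk_singleton {I : Ideal (𝓞 K)} (hI : I ≠ ⊥) (q : 𝓞 K ⧸ I) :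
    HasHouseDensity (Ideal.Quotient.mk I ⁻¹' {q}) (Ideal.absNorm I : ℝ)⁻¹ := by
  classical
  have : Finite (𝓞 K ⧸ I) := Ideal.finiteQuotientOfFreeOfNeBot I hI
  have := Fintype.ofFinite (𝓞 K ⧸ I)
  let f (p : 𝓞 K ⧸ I) : ℝ → ℝ := houseProportion (Ideal.Quotient.mk I ⁻¹' {p})
  have card_eq : (Fintype.card (𝓞 K ⧸ I) : ℝ) = Ideal.absNorm I := by
    rw [Ideal.absNorm_apply, Submodule.cardQuot_apply, Nat.card_eq_fintype_card]
  have absNorm_ne_zero : (Ideal.absNorm I : ℝ) ≠ 0 := by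
    exact_mod_cast Ideal.absNorm_eq_zero_iff.not.mpr hI
  have sum_eq_one {X : ℝ} (hX : 0 ≤ X) : ∑ p, f p X = 1 := by
    rw [← houseProportion_biUnion (Set.pairwiseDisjoint_fiber _ _)]
    simpa [← Set.preimage_iUnion, Set.iUnion_of_singleton] using houseProportion_univ (K := K) hX
  have sum_sub : Tendsto (fun X ↦ ∑ p, (f p X - f q X)) atTop (𝓝 0) := by
    simpa using tendsto_finsetSum Finset.univ fun p _ ↦ tendsto_houseProportion_preimage_mk_sub p q
  have h := (sum_sub.const_sub 1).div_const (Ideal.absNorm I : ℝ)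
  rw [sub_zero, one_div] at h
  refine h.congr' ?_
  filter_upwards [eventually_ge_atTop 0] with X hX
  rw [Finset.sum_sub_distrib, sum_eq_one hX, sub_sub_cancel, Finset.sum_const, nsmul_eq_mul,
    Finset.card_univ, card_eq, mul_div_cancel_left₀ _ absNorm_ne_zero]

theorem hasHouseDensity_preimage_mk {I : Ideal (𝓞 K)} (hI : I ≠ ⊥) (W : Set (𝓞 K ⧸ I)) :
    HasHouseDensity (Ideal.Quotient.mk I ⁻¹' W) ((W.ncard : ℝ) / Ideal.absNorm I) := by
  have : Finite (𝓞 K ⧸ I) := Ideal.finiteQuotientOfFreeOfNeBot I hI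
  lift W to Finset (𝓞 K ⧸ I) using W.toFinite
  have h := HasHouseDensity.biUnion (s := W) (fun q _ ↦ hasHouseDensity_preimage_mk_singleton hI q)
    (Set.pairwiseDisjoint_fiber _ _)
  rw [Finset.sum_const, nsmul_eq_mul, ← div_eq_mul_inv, ← Set.ncard_coe_finset] at h
  simpa only [← Finset.mem_coe, Set.biUnion_preimage_singleton] using h

theorem hasHouseDensity_iInter_preimage_mk {ι : Type*} [Fintype ι] {I : ι → Ideal (𝓞 K)}
    (hI : ∀ i, I i ≠ ⊥) (hI_coprime : Pairwise (Function.onFun IsCoprime I))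
    (W : ∀ i, Set (𝓞 K ⧸ I i)) :
    HasHouseDensity (⋂ i, Ideal.Quotient.mk (I i) ⁻¹' W i)
      (∏ i, ((W i).ncard : ℝ) / Ideal.absNorm (I i)) := by
  let e := Ideal.quotientInfRingEquivPiQuotient I hI_coprime
  have iInf_ne_bot : ⨅ i, I i ≠ ⊥ := by
    have prod_ne_zero : ∏ i, I i ≠ 0 := Finset.prod_ne_zero_iff.mpr fun i _ ↦ hI i
    refine ne_bot_of_le_ne_bot prod_ne_zero ?_
    rw [← Finset.inf_univ_eq_iInf]
    exact Ideal.prod_le_inf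
  have ncard_eq : (e ⁻¹' Set.univ.pi W).ncard = ∏ i, (W i).ncard := by
    simp only [← Nat.card_coe_set_eq, ← Nat.card_pi]
    exact Nat.card_congr ((e.toEquiv.subtypeEquiv fun _ ↦ Iff.rfl).trans (Equiv.Set.univPi W))
  have absNorm_eq : Ideal.absNorm (⨅ i, I i) = ∏ i, Ideal.absNorm (I i) := by
    simp only [Ideal.absNorm_apply, Submodule.cardQuot_apply, ← Nat.card_pi]
    exact Nat.card_congr e.toEquiv
  have preimage_eq : Ideal.Quotient.mk (⨅ i, I i) ⁻¹' (e ⁻¹' Set.univ.pi W) =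
      ⋂ i, Ideal.Quotient.mk (I i) ⁻¹' W i := by
    ext x
    simp only [Set.mem_preimage, Set.mem_univ_pi, Set.mem_iInter]
    rfl
  have h := hasHouseDensity_preimage_mk iInf_ne_bot (e ⁻¹' Set.univ.pi W)
  rwa [preimage_eq, ncard_eq, absNorm_eq, Nat.cast_prod, Nat.cast_prod,
    ← Finset.prod_div_distrib] at h

end ResidueClasses

section IdealTail

variable (K : Type*) [Field K] [NumberField K]

theorem exists_houseProportion_le_of_separated :
    ∃ C : ℝ, 0 ≤ C ∧ ∀ (A : Set (𝓞 K)) (D X : ℝ), 1 ≤ D → D ≤ X →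
      (A.Pairwise fun x y ↦ D ≤ house ((x - y : 𝓞 K) : K)) →
      houseProportion A X ≤ C * (D ^ Module.finrank ℚ K)⁻¹ := by
  obtain ⟨c, hc, lower⟩ := exists_mul_pow_le_ncard_houseBall K
  obtain ⟨C, hC, upper⟩ := exists_ncard_houseBall_le_mul_pow K
  set n := Module.finrank ℚ K
  refine ⟨C * 6 ^ n / c ^ 2, by positivity, fun A D X one_le_D D_le_X hA ↦ ?_⟩
  have X_pos : 0 < X := by linarith
  have separated : A.Pairwise fun x y ↦ D / 3 + D / 3 < house ((x - y : 𝓞 K) : K) :=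
    hA.imp fun x y hxy ↦ lt_of_lt_of_le (by linarith) hxy
  have packing : ((A ∩ houseBall K X).ncard : ℝ) * (c * (D / 3) ^ n) ≤ C * (2 * X) ^ n :=
    calc _ ≤ ((A ∩ houseBall K X).ncard : ℝ) * (houseBall K (D / 3)).ncard := by
          gcongr
          exact lower _ (by positivity)
      _ ≤ (houseBall K (X + D / 3)).ncard := by
          exact_mod_cast ncard_inter_houseBall_mul_ncard_houseBall_le separated X
      _ ≤ (houseBall K (2 * X)).ncard := by
          exact_mod_cast ncard_houseBall_mono (by linarith)
      _ ≤ _ := upper _ (by linarith)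
  calc houseProportion A X ≤ (A ∩ houseBall K X).ncard / (c * X ^ n) := by
        unfold houseProportion
        gcongr
        exact lower X X_pos.le
    _ ≤ C * (2 * X) ^ n / (c * (D / 3) ^ n) / (c * X ^ n) := by
        gcongr
        exact (le_div_iff₀ (by positivity)).mpr packing
    _ = C * 6 ^ n / c ^ 2 * (D ^ n)⁻¹ := by
        rw [show (6 : ℝ) = 2 * 3 by norm_num, mul_pow, mul_pow, div_pow]
        field_simp

theorem exists_houseProportion_ideal_le :
    ∃ C : ℝ, ∀ I : Ideal (𝓞 K), I ≠ ⊥ → ∀ X,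
      houseProportion ((I : Set (𝓞 K)) \ {0}) X ≤ C * (Ideal.absNorm I : ℝ)⁻¹ := by
  obtain ⟨C, hC, separated_le⟩ := exists_houseProportion_le_of_separated K
  set n := Module.finrank ℚ K
  have hn : n ≠ 0 := Module.finrank_pos.ne'
  refine ⟨C, fun I hI X ↦ ?_⟩
  set A := (I : Set (𝓞 K)) \ {0}
  have one_le_absNorm : (1 : ℝ) ≤ Ideal.absNorm I := by
    exact_mod_cast Nat.one_le_iff_ne_zero.mpr (Ideal.absNorm_eq_zero_iff.not.mpr hI)
  obtain ⟨D, one_le_D, hD⟩ : ∃ D : ℝ, 1 ≤ D ∧ D ^ n = Ideal.absNorm I :=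
    ⟨(Ideal.absNorm I : ℝ) ^ (n : ℝ)⁻¹, Real.one_le_rpow one_le_absNorm (by positivity),
      Real.rpow_inv_natCast_pow (by positivity) hn⟩
  have le_house {y : 𝓞 K} (hy : y ∈ A) : D ≤ house (y : K) :=
    le_of_pow_le_pow_left₀ hn (house_nonneg _) (hD.trans_le (absNorm_le_house_pow hy.1 hy.2))
  rcases (A ∩ houseBall K X).eq_empty_or_nonempty with hempty | ⟨y, hyA, hyX⟩
  · rw [houseProportion, hempty, Set.ncard_empty, Nat.cast_zero, zero_div]
    positivity
  · rw [← hD]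
    exact separated_le A D X one_le_D ((le_house hyA).trans hyX) fun x hx y hy hxy ↦
      le_house ⟨I.sub_mem hx.1 hy.1, sub_ne_zero.mpr hxy⟩

variable {K}

theorem tendsto_houseProportion_vadd_iUnion_ideal {ι : Type*} {I : ι → Ideal (𝓞 K)}
    (hI : ∀ i, I i ≠ ⊥) (hI_summable : Summable fun i ↦ (Ideal.absNorm (I i) : ℝ)⁻¹) (t : 𝓞 K) :
    Tendsto (fun p : Finset ι × ℝ ↦
        houseProportion (t +ᵥ ⋃ i : {i // i ∉ p.1}, (I i : Set (𝓞 K))) p.2)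
      (atTop ×ˢ atTop) (𝓝 0) := by
  obtain ⟨C, hC⟩ := exists_houseProportion_ideal_le K
  let shell (X : ℝ) : ℝ := ((houseBall K (X + house (t : K))).ncard : ℝ) / (houseBall K X).ncard - 1
  let tail (Q : Finset ι) : ℝ := ∑' i : {i // i ∉ Q}, C * (Ideal.absNorm (I i) : ℝ)⁻¹
  have shell_tendsto : Tendsto shell atTop (𝓝 0) :=
    sub_self (1 : ℝ) ▸ (tendsto_ncard_houseBall_add_div _).sub_const 1
  have tail_tendsto : Tendsto tail atTop (𝓝 0) :=
    tendsto_tsum_compl_atTop_zero fun i ↦ C * (Ideal.absNorm (I i) : ℝ)⁻¹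
  have bound_tendsto : Tendsto
      (fun p : Finset ι × ℝ ↦ tail p.1 + houseProportion ({0} : Set (𝓞 K)) p.2 + shell p.2)
      (atTop ×ˢ atTop) (𝓝 0) := by
    simpa using ((tail_tendsto.comp tendsto_fst).add
      (hasHouseDensity_singleton_zero.comp tendsto_snd)).add (shell_tendsto.comp tendsto_snd)
  refine squeeze_zero' (.of_forall fun p ↦ by unfold houseProportion; positivity) ?_ bound_tendsto
  filter_upwards [tendsto_snd.eventually (eventually_ge_atTop 0)] with ⟨Q, X⟩ hX
  let U := ⋃ i : {i // i ∉ Q}, (I i : Set (𝓞 K))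
  have cover : U ⊆ (⋃ i : {i // i ∉ Q}, (I i : Set (𝓞 K)) \ {0}) ∪ {0} := by
    rw [← Set.iUnion_sdiff, Set.sdiff_union_self]
    exact Set.subset_union_left
  calc houseProportion (t +ᵥ U) X ≤ houseProportion U X + shell X := houseProportion_vadd_le t U hX
    _ ≤ houseProportion (⋃ i : {i // i ∉ Q}, (I i : Set (𝓞 K)) \ {0}) X
          + houseProportion {0} X + shell X := by
        gcongr
        exact (houseProportion_mono cover X).trans (houseProportion_union_le _ _ X)
    _ ≤ tail Q + houseProportion {0} X + shell X := by
        gcongr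
        exact houseProportion_iUnion_le_tsum ((hI_summable.mul_left C).subtype _)
          fun i ↦ hC (I i) (hI i) X

end IdealTail

section IdealSummability

theorem summable_rpow_neg_of_sum_card_isBigO {α : Type*} {a : α → ℕ} {r s : ℝ}
    (ha : ∀ n, {x | a x = n}.Finite)
    (hO : (fun n : ℕ ↦ ∑ k ∈ Finset.Icc 1 n, (Nat.card {x // a x = k} : ℝ)) =O[atTop]
      fun n ↦ (n : ℝ) ^ r)
    (hr : 0 ≤ r) (hs : r < s) : Summable fun x ↦ (a x : ℝ) ^ (-s) := by
  have hL : LSeriesSummable (fun n ↦ ((Nat.card {x // a x = n} : ℝ) : ℂ)) s :=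
    LSeriesSummable_of_sum_norm_bigO_and_nonneg hO (fun _ ↦ Nat.cast_nonneg _) hr
      (by rwa [Complex.ofReal_re])
  rw [← (Equiv.sigmaFiberEquiv a).summable_iff, summable_sigma_of_nonneg fun _ ↦
    by rw [Function.comp_apply]; positivity]
  have fiber_eq (n : ℕ) (x : {x // a x = n}) :
      ((fun x ↦ (a x : ℝ) ^ (-s)) ∘ Equiv.sigmaFiberEquiv a) ⟨n, x⟩ = (n : ℝ) ^ (-s) := by
    simp [Equiv.sigmaFiberEquiv, x.2]
  have fiber_finite (n : ℕ) : Finite {x // a x = n} := ha n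
  refine ⟨fun n ↦ Summable.of_finite, hL.norm.congr fun n ↦ ?_⟩
  rw [tsum_congr (fiber_eq n), tsum_const, LSeries.norm_term_eq]
  rcases eq_or_ne n 0 with rfl | hn
  · rw [if_pos rfl, Nat.cast_zero, Real.zero_rpow (by linarith), smul_zero]
  · rw [if_neg hn, Real.rpow_neg (Nat.cast_nonneg _)]
    simp [div_eq_mul_inv]

variable (K : Type*) [Field K] [NumberField K]

theorem sum_card_absNorm_eq_add_one (n : ℕ) :
    ∑ k ∈ Finset.Icc 1 n, Nat.card {I : Ideal (𝓞 K) // Ideal.absNorm I = k} + 1 =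
      Nat.card {I : Ideal (𝓞 K) // Ideal.absNorm I ≤ n} := by
  have card_eq_zero : Nat.card {I : Ideal (𝓞 K) // Ideal.absNorm I = 0} = 1 := by
    simp [Ideal.absNorm_eq_zero_iff]
  rw [show Finset.Icc 1 n = Finset.Ioc 0 n from Finset.Icc_succ_left_eq_Ioc _ _, ← card_eq_zero,
    Finset.sum_Ioc_add_eq_sum_Icc n.zero_le, ← Finset.card_preimage_eq_sum_card_image_eq
      fun k _ ↦ Ideal.finite_setOfPred_absNorm_eq k]
  simp [Set.coe_eq_subtype]

theorem summable_absNorm_rpow_neg {s : ℝ} (hs : 1 < s) :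
    Summable fun I : Ideal (𝓞 K) ↦ (Ideal.absNorm I : ℝ) ^ (-s) := by
  refine summable_rpow_neg_of_sum_card_isBigO Ideal.finite_setOfPred_absNorm_eq ?_ zero_le_one hs
  refine Asymptotics.isBigO_atTop_natCast_rpow_of_tendsto_div_rpow
    (((NumberField.Ideal.tendsto_norm_le_div_atTop₀ K).comp tendsto_natCast_atTop_atTop).congr
      fun n ↦ ?_)
  simp only [Function.comp_apply, Nat.cast_le, Real.rpow_one, ← Nat.cast_sum]
  congr 2
  rw [← add_left_inj 1, ← Ideal.card_norm_le_eq_card_norm_le_add_one,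
    sum_card_absNorm_eq_add_one]

end IdealSummability

section Sieve

/-- The nonzero prime ideals of `𝓞 K`, over which the sieve and the density product range. -/
abbrev NonzeroPrime (K : Type*) [Field K] [NumberField K] : Type _ :=
  {P : Ideal (𝓞 K) // P.IsPrime ∧ P ≠ ⊥}

variable {K : Type*} [Field K] [NumberField K]

namespace ResidueSieve

/-- The integers of `K` avoiding the sieve at the finitely many primes in `Q`; these sets decrease
to `S.V` as `Q` grows. -/
def partialV (S : ResidueSieve K) (Q : Finset (NonzeroPrime K)) : Set (𝓞 K) :=
  ⋂ P : Q, Ideal.Quotient.mk (P.1.1 ^ S.k P.1.1) ⁻¹' (S.R P.1.1)ᶜ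

theorem V_subset_partialV (S : ResidueSieve K) (Q : Finset (NonzeroPrime K)) :
    S.V ⊆ S.partialV Q :=
  fun _ hx ↦ Set.mem_iInter.mpr fun P ↦ hx P.1.1 P.1.2.1 P.1.2.2

theorem meas_nonneg (S : ResidueSieve K) (P : Ideal (𝓞 K)) : 0 ≤ S.meas P := by
  unfold meas
  positivity

theorem meas_eq_ncard_div_absNorm (S : ResidueSieve K) (P : Ideal (𝓞 K)) :
    S.meas P = ((S.R P).ncard : ℝ) / Ideal.absNorm (P ^ S.k P) := by
  rw [meas, Nat.card_coe_set_eq, map_pow, Nat.cast_pow]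

theorem one_sub_meas (S : ResidueSieve K) {P : Ideal (𝓞 K)} (hP : P ≠ ⊥) :
    1 - S.meas P = ((S.R P)ᶜ.ncard : ℝ) / Ideal.absNorm (P ^ S.k P) := by
  have hPk : P ^ S.k P ≠ ⊥ := pow_ne_zero _ hP
  have : Finite (𝓞 K ⧸ P ^ S.k P) := Ideal.finiteQuotientOfFreeOfNeBot _ hPk
  have absNorm_ne_zero : (Ideal.absNorm (P ^ S.k P) : ℝ) ≠ 0 := by
    exact_mod_cast Ideal.absNorm_eq_zero_iff.not.mpr hPk
  rw [meas_eq_ncard_div_absNorm, eq_div_iff absNorm_ne_zero, sub_mul, one_mul,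
    div_mul_cancel₀ _ absNorm_ne_zero, sub_eq_iff_eq_add', Ideal.absNorm_apply,
    Submodule.cardQuot_apply]
  exact_mod_cast (Set.ncard_add_ncard_compl (S.R P)).symm

theorem one_sub_meas_pos (S : ResidueSieve K) {P : Ideal (𝓞 K)} (hP : P ≠ ⊥)
    (hR : S.R P ≠ Set.univ) : 0 < 1 - S.meas P := by
  have hPk : P ^ S.k P ≠ ⊥ := pow_ne_zero _ hP
  have : Finite (𝓞 K ⧸ P ^ S.k P) := Ideal.finiteQuotientOfFreeOfNeBot _ hPk
  rw [S.one_sub_meas hP]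
  refine div_pos ?_ ?_
  · exact_mod_cast (Set.ncard_pos (Set.toFinite _)).mpr (Set.nonempty_compl.mpr hR)
  · exact_mod_cast Nat.pos_of_ne_zero (Ideal.absNorm_eq_zero_iff.not.mpr hPk)

theorem hasHouseDensity_partialV (S : ResidueSieve K) (Q : Finset (NonzeroPrime K)) :
    HasHouseDensity (S.partialV Q) (∏ P ∈ Q, (1 - S.meas P.1)) := by
  rw [← Finset.prod_coe_sort Q fun P ↦ 1 - S.meas P.1,
    Finset.prod_congr rfl fun P _ ↦ S.one_sub_meas P.1.2.2]
  refine hasHouseDensity_iInter_preimage_mk (fun P ↦ pow_ne_zero _ P.1.2.2)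
    (fun P P' hne ↦ IsCoprime.pow ?_) _
  have := P.1.2.1.isMaximal P.1.2.2
  have := P'.1.2.1.isMaximal P'.1.2.2
  exact Ideal.isCoprime_of_isMaximal fun h ↦ hne (Subtype.ext (Subtype.ext h))

theorem meas_le (S : ResidueSieve K) {P J : Ideal (𝓞 K)} {T : Finset (𝓞 K)} (hP : P ≠ ⊥)
    (hJ : J ≠ ⊥) (hT : ∀ x, S.Mem P x → ∃ t ∈ T, x - t ∈ J) :
    S.meas P ≤ T.card * (Ideal.absNorm J : ℝ)⁻¹ := by
  let W : Set (𝓞 K ⧸ J) := Ideal.Quotient.mk J '' T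
  have W_ncard_le : W.ncard ≤ T.card :=
    (Set.ncard_image_le T.finite_toSet).trans_eq (Set.ncard_coe_finset T)
  have subset : Ideal.Quotient.mk (P ^ S.k P) ⁻¹' S.R P ⊆ Ideal.Quotient.mk J ⁻¹' W := by
    intro x hx
    obtain ⟨t, ht, hxt⟩ := hT x hx
    exact ⟨t, ht, (Ideal.Quotient.eq.mpr hxt).symm⟩
  calc S.meas P = ((S.R P).ncard : ℝ) / Ideal.absNorm (P ^ S.k P) := S.meas_eq_ncard_div_absNorm P
    _ ≤ (W.ncard : ℝ) / Ideal.absNorm J :=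
      (hasHouseDensity_preimage_mk (pow_ne_zero _ hP) _).le_of_subset
        (hasHouseDensity_preimage_mk hJ W) subset
    _ ≤ T.card * (Ideal.absNorm J : ℝ)⁻¹ := by
      rw [div_eq_mul_inv]
      gcongr

variable {J : NonzeroPrime K → Ideal (𝓞 K)} {T : Finset (𝓞 K)}

theorem partialV_subset (S : ResidueSieve K) (hT : ∀ P x, S.Mem P.1 x → ∃ t ∈ T, x - t ∈ J P)
    (Q : Finset (NonzeroPrime K)) :
    S.partialV Q ⊆ S.V ∪ ⋃ t ∈ T, t +ᵥ ⋃ P : {P // P ∉ Q}, (J P : Set (𝓞 K)) := by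
  intro x hx
  by_cases hxV : x ∈ S.V
  · exact Or.inl hxV
  · simp only [V, Set.mem_ofPred_eq, not_forall, not_not] at hxV
    obtain ⟨P, hP, hP0, hxP⟩ := hxV
    obtain ⟨t, ht, hxt⟩ := hT ⟨P, hP, hP0⟩ x hxP
    have hPQ : ⟨P, hP, hP0⟩ ∉ Q := fun hPQ ↦ Set.mem_iInter.mp hx ⟨_, hPQ⟩ hxP
    refine Or.inr (Set.mem_biUnion ht (Set.mem_vadd_set_iff_neg_vadd_mem.mpr ?_))
    exact Set.mem_iUnion.mpr ⟨⟨_, hPQ⟩, by rwa [vadd_eq_add, neg_add_eq_sub]⟩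

theorem tendstoUniformlyOnFilter_houseProportion_partialV (S : ResidueSieve K)
    (hJ : ∀ P, J P ≠ ⊥) (hJ_summable : Summable fun P ↦ (Ideal.absNorm (J P) : ℝ)⁻¹)
    (hT : ∀ P x, S.Mem P.1 x → ∃ t ∈ T, x - t ∈ J P) :
    TendstoUniformlyOnFilter (fun Q ↦ houseProportion (S.partialV Q)) (houseProportion S.V)
      atTop atTop := by
  let tail (Q : Finset (NonzeroPrime K)) : Set (𝓞 K) := ⋃ P : {P // P ∉ Q}, (J P : Set (𝓞 K))
  have error_tendsto : Tendsto
      (fun p : Finset (NonzeroPrime K) × ℝ ↦ ∑ t ∈ T, houseProportion (t +ᵥ tail p.1) p.2)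
      (atTop ×ˢ atTop) (𝓝 0) := by
    simpa using tendsto_finsetSum T fun t _ ↦
      tendsto_houseProportion_vadd_iUnion_ideal hJ hJ_summable t
  rw [Metric.tendstoUniformlyOnFilter_iff]
  intro ε hε
  filter_upwards [error_tendsto.eventually_lt_const hε] with ⟨Q, X⟩ hQX
  rw [dist_comm, Real.dist_eq,
    abs_of_nonneg (sub_nonneg.mpr (houseProportion_mono (S.V_subset_partialV Q) X))]
  refine lt_of_le_of_lt (sub_le_iff_le_add'.mpr ?_) hQX
  calc houseProportion (S.partialV Q) X
      ≤ houseProportion (S.V ∪ ⋃ t ∈ T, t +ᵥ tail Q) X :=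
        houseProportion_mono (S.partialV_subset hT Q) X
    _ ≤ houseProportion S.V X + houseProportion (⋃ t ∈ T, t +ᵥ tail Q) X :=
        houseProportion_union_le _ _ X
    _ ≤ houseProportion S.V X + ∑ t ∈ T, houseProportion (t +ᵥ tail Q) X := by
        gcongr
        exact houseProportion_biUnion_le T _ X

theorem summable_meas (S : ResidueSieve K) (hJ : ∀ P, J P ≠ ⊥)
    (hJ_summable : Summable fun P ↦ (Ideal.absNorm (J P) : ℝ)⁻¹)
    (hT : ∀ P x, S.Mem P.1 x → ∃ t ∈ T, x - t ∈ J P) :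
    Summable fun P : NonzeroPrime K ↦ S.meas P.1 :=
  .of_nonneg_of_le (fun P ↦ S.meas_nonneg P.1) (fun P ↦ S.meas_le P.2.2 (hJ P) (hT P))
    (hJ_summable.mul_left _)

end ResidueSieve

theorem summable_inv_absNorm_prime_sq (K : Type*) [Field K] [NumberField K] :
    Summable fun P : NonzeroPrime K ↦ (Ideal.absNorm (P.1 ^ 2) : ℝ)⁻¹ := by
  refine ((summable_absNorm_rpow_neg K one_lt_two).comp_injective
    Subtype.val_injective).congr fun P ↦ ?_
  rw [Function.comp_apply, Real.rpow_neg (Nat.cast_nonneg _), Real.rpow_ofNat, map_pow,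
    Nat.cast_pow]

theorem multipliable_and_tprod_pos_of_summable {ι : Type*} {f : ι → ℝ} (hf : Summable f)
    (hpos : ∀ i, 0 < 1 - f i) :
    Multipliable (fun i ↦ 1 - f i) ∧ 0 < ∏' i, (1 - f i) := by
  have summable_log : Summable fun i ↦ Real.log (1 - f i) := by
    simpa only [sub_eq_add_neg] using Real.summable_log_one_add_of_summable hf.neg
  refine ⟨Real.multipliable_of_summable_log hpos summable_log, ?_⟩
  rw [← Real.rexp_tsum_eq_tprod hpos summable_log]
  exact Real.exp_pos _

theorem sieve_density_general (S : ResidueSieve K) (T : Finset (𝓞 K))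
    (J : NonzeroPrime K → Ideal (𝓞 K)) (hJ : ∀ P, J P ≠ ⊥)
    (hJ_summable : Summable fun P ↦ (Ideal.absNorm (J P) : ℝ)⁻¹)
    (hT : ∀ P x, S.Mem P.1 x → ∃ t ∈ T, x - t ∈ J P)
    (hne : ∀ P : NonzeroPrime K, S.R P.1 ≠ Set.univ) :
    Multipliable (fun P : NonzeroPrime K ↦ 1 - S.meas P.1) ∧
    0 < (∏' P : NonzeroPrime K, (1 - S.meas P.1)) ∧
    HasHouseDensity S.V (∏' P : NonzeroPrime K, (1 - S.meas P.1)) := by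
  obtain ⟨multipliable, tprod_pos⟩ := multipliable_and_tprod_pos_of_summable
    (S.summable_meas hJ hJ_summable hT) fun P ↦ S.one_sub_meas_pos P.2.2 (hne P)
  refine ⟨multipliable, tprod_pos, ?_⟩
  exact (S.tendstoUniformlyOnFilter_houseProportion_partialV hJ hJ_summable
    hT).tendsto_of_eventually_tendsto (.of_forall S.hasHouseDensity_partialV) multipliable.hasProd

end Sieve

/-- Density of the sifted set: under the assumptions of the strong approximation
theorem for sieves, the density of `V(K,R)` in `𝓞 K` (with respect to the house norm)
exists and equals the convergent infinite product `∏_𝔭 (1 − meas R_𝔭)`, which is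
strictly positive. -/
theorem sieve_density {K : Type*} [Field K] [NumberField K]
    (S : ResidueSieve K) (T : Finset (𝓞 K))
    (hT : ∀ P : Ideal (𝓞 K), P.IsPrime → P ≠ ⊥ →
      ∀ x : 𝓞 K, S.Mem P x → ∃ t ∈ T, x - t ∈ P ^ 2)
    (hne : ∀ P : Ideal (𝓞 K), P.IsPrime → P ≠ ⊥ → S.R P ≠ Set.univ) :
    Multipliable (fun P : {P : Ideal (𝓞 K) // P.IsPrime ∧ P ≠ ⊥} => 1 - S.meas P.1) ∧
    0 < (∏' P : {P : Ideal (𝓞 K) // P.IsPrime ∧ P ≠ ⊥}, (1 - S.meas P.1)) ∧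
    Filter.Tendsto
      (fun X : ℝ =>
        (Nat.card {x : 𝓞 K // x ∈ S.V ∧ house (x : K) ≤ X} : ℝ) /
        (Nat.card {x : 𝓞 K // house (x : K) ≤ X} : ℝ))
      Filter.atTop
      (nhds (∏' P : {P : Ideal (𝓞 K) // P.IsPrime ∧ P ≠ ⊥}, (1 - S.meas P.1))) := by
  exact sieve_density_general S T (fun P ↦ P.1 ^ 2) (fun P ↦ pow_ne_zero 2 P.2.2)
    (summable_inv_absNorm_prime_sq K) (fun P ↦ hT P.1 P.2.1 P.2.2) fun P ↦ hne P.1 P.2.1 P.2.2
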